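/- arXiv:1101.2875 — 2 statements merged into one kernel-verified Lean document; each statement's English description precedes it below -/
import Mathlib

section
/- (Mehler formula) For all real x, y and all real ρ with |ρ| < 1, the series Σ_{n=0}^∞ (ρⁿ/n!)·H_n(x)·H_n(y) converges and equals (1/√(1−ρ²))·exp((x² + y²)/2)·exp(−(x² + y² − 2ρxy)/(2(1−ρ²))). -/
noncomputable section

open Finset

/-- The q-integer `[n]_q = 1 + q + ⋯ + q^{n-1}`. -/
def qInt (q : ℝ) (n : ℕ) : ℝ := ∑ i ∈ Finset.range n, q ^ i

/-- The q-factorial `[n]_q!`. -/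
def qFact (q : ℝ) (n : ℕ) : ℝ := ∏ j ∈ Finset.range n, qInt q (j + 1)

/-- The q-binomial coefficient. -/
def qBinom (q : ℝ) (n k : ℕ) : ℝ :=
  if k ≤ n then qFact q n / (qFact q (n - k) * qFact q k) else 0

/-- The finite q-Pochhammer symbol `(a;q)_n`. -/
def qPoch (a q : ℝ) (n : ℕ) : ℝ := ∏ j ∈ Finset.range n, (1 - a * q ^ j)

/-- The infinite q-Pochhammer symbol `(a;q)_∞`. -/
def qPochInf (a q : ℝ) : ℝ := ∏' j : ℕ, (1 - a * q ^ j)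

/-- The q-Hermite polynomials `H_n(x|q)`. -/
def qHermite (q : ℝ) : ℕ → ℝ → ℝ
  | 0, _ => 1
  | 1, x => x
  | n + 2, x => x * qHermite q (n + 1) x - qInt q (n + 1) * qHermite q n x

/-- The rescaled q-ultraspherical polynomials `R_n(x|β,q)`. -/
def qUltra (q β : ℝ) : ℕ → ℝ → ℝ
  | 0, _ => 1
  | 1, x => (1 - β) * x
  | n + 2, x => (1 - β * q ^ (n + 1)) * x * qUltra q β (n + 1) x
      - (1 - β ^ 2 * q ^ n) * qInt q (n + 1) * qUltra q β n x

/-- The Al-Salam–Chihara polynomials `P_n(x|y,ρ,q)`. -/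
def ASC (q y ρ : ℝ) : ℕ → ℝ → ℝ
  | 0, _ => 1
  | 1, x => x - ρ * y
  | n + 2, x => (x - ρ * y * q ^ (n + 1)) * ASC q y ρ (n + 1) x
      - (1 - ρ ^ 2 * q ^ n) * qInt q (n + 1) * ASC q y ρ n x

/-- The polynomials `B_n(y|q)` (q⁻¹-Hermite related). -/
def qB (q : ℝ) : ℕ → ℝ → ℝ
  | 0, _ => 1
  | 1, y => -y
  | n + 2, y => -q ^ (n + 1) * y * qB q (n + 1) y + q ^ n * qInt q (n + 1) * qB q n y

/-- The big q-Hermite polynomials `H_n(x|a,q)`. -/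
def bigqHermite (q a : ℝ) : ℕ → ℝ → ℝ
  | 0, _ => 1
  | 1, x => x - a
  | n + 2, x => (x - a * q ^ (n + 1)) * bigqHermite q a (n + 1) x
      - qInt q (n + 1) * bigqHermite q a n x

/-- The probabilistic Hermite polynomials `H_n(x)`. -/
def probHermite : ℕ → ℝ → ℝ
  | 0, _ => 1
  | 1, x => x
  | n + 2, x => x * probHermite (n + 1) x - (n + 1) * probHermite n x

/-- The probabilistic Hermite polynomials on ℂ. -/
def probHermiteC : ℕ → ℂ → ℂ
  | 0, _ => 1
  | 1, x => x
  | n + 2, x => x * probHermiteC (n + 1) x - (n + 1) * probHermiteC n x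

/-- The Chebyshev polynomials of the second kind. -/
def chebU : ℕ → ℝ → ℝ
  | 0, _ => 1
  | 1, x => 2 * x
  | n + 2, x => 2 * x * chebU (n + 1) x - chebU n x

/-- The Chebyshev polynomials of the first kind. -/
def chebT : ℕ → ℝ → ℝ
  | 0, _ => 1
  | 1, x => x
  | n + 2, x => 2 * x * chebT (n + 1) x - chebT n x

/-- `W_k(x,y,t|q)`. -/
def Wk (q x y t : ℝ) (k : ℕ) : ℝ :=
  (1 - t ^ 2 * q ^ (2 * k)) ^ 2 - (1 - q) * x * y * t * q ^ k * (1 + t ^ 2 * q ^ (2 * k))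
    + (1 - q) * t ^ 2 * q ^ (2 * k) * (x ^ 2 + y ^ 2)

/-- `V_k(x,a|q)`. -/
def Vk (q x a : ℝ) (k : ℕ) : ℝ :=
  1 - (1 - q) * a * x * q ^ k + (1 - q) * a ^ 2 * q ^ (2 * k)

/-- `L_k(x,a|q)`. -/
def Lk (q x a : ℝ) (k : ℕ) : ℝ :=
  (1 + a * q ^ k) ^ 2 - (1 - q) * x ^ 2 * a ^ 2 * q ^ k

/-- The support interval `S(q) = [-2/√(1-q), 2/√(1-q)]` for `|q| < 1`. -/
def Sq (q : ℝ) : Set ℝ := Set.Icc (-(2 / Real.sqrt (1 - q))) (2 / Real.sqrt (1 - q))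

/-- A power series vanishing identically on the unit disc has vanishing coefficients. -/
theorem coeff_eq_zero_of_hasSum_zero {b : ℕ → ℂ}
    (h : ∀ z : ℂ, ‖z‖ < 1 → HasSum (fun n => b n * z ^ n) 0) (n : ℕ) : b n = 0 := by
  have hp : HasFPowerSeriesAt (0 : ℂ → ℂ) (FormalMultilinearSeries.ofScalars ℂ b) 0 := by
    rw [hasFPowerSeriesAt_iff]
    filter_upwards [Metric.ball_mem_nhds (0 : ℂ) one_pos] with z hz
    simpa [mul_comm] using h z (by simpa using hz)
  rw [← FormalMultilinearSeries.coeff_ofScalars (𝕜 := ℂ) (p := b), hp.eq_zero]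
  rfl

/-- The sequence of coefficients of `z * f z`, given those of `f`. -/
def shiftCoeff (b : ℕ → ℂ) : ℕ → ℂ
  | 0 => 0
  | n + 1 => b n

theorem hasSum_shiftCoeff {b : ℕ → ℂ} {z s : ℂ} (h : HasSum (fun n => b n * z ^ n) s) :
    HasSum (fun n => shiftCoeff b n * z ^ n) (z * s) := by
  rw [← hasSum_nat_add_iff' 1]
  convert! h.mul_left z using 1
  · funext n
    simp only [shiftCoeff]
    ring
  · simp [shiftCoeff]

/-- The coefficient `H_n(x) H_n(y) / n!` of the Mehler series. -/
def hermiteCoeff (x y : ℝ) (n : ℕ) : ℝ :=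
  probHermite n x * probHermite n y / n.factorial

theorem hermiteCoeff_recurrence (x y : ℝ) (n : ℕ) :
    (n + 4) * hermiteCoeff x y (n + 4) =
      x * y * (hermiteCoeff x y (n + 3) + hermiteCoeff x y (n + 1))
        + (2 * n + 5 - (x ^ 2 + y ^ 2)) * hermiteCoeff x y (n + 2)
        - (n + 1) * hermiteCoeff x y n := by
  have hf : (n.factorial : ℝ) ≠ 0 := by positivity
  have h1 : (n : ℝ) + 1 ≠ 0 := by positivity
  have h2 : (n : ℝ) + 2 ≠ 0 := by positivity
  have h3 : (n : ℝ) + 3 ≠ 0 := by positivity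
  have h4 : (n : ℝ) + 4 ≠ 0 := by positivity
  simp only [hermiteCoeff, probHermite, Nat.factorial_succ]
  push_cast
  simp only [add_assoc]
  norm_num
  field_simp
  ring

open Complex in
/-- The Mehler kernel as a holomorphic function on the unit disc. -/
def mehlerKernel (x y z : ℂ) : ℂ :=
  (1 - z ^ 2) ^ (-1 / 2 : ℂ) *
    cexp ((2 * z * x * y - z ^ 2 * (x ^ 2 + y ^ 2)) / (2 * (1 - z ^ 2)))

open Complex in
theorem one_sub_sq_mem_slitPlane {z : ℂ} (hz : ‖z‖ < 1) : 1 - z ^ 2 ∈ slitPlane := by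
  left
  have h : (z ^ 2).re < 1 :=
    (re_le_norm _).trans_lt (by rw [norm_pow]; exact pow_lt_one₀ (norm_nonneg z) hz two_ne_zero)
  simpa using h

open Complex in
theorem hasDerivAt_mehlerKernel (x y : ℂ) {z : ℂ} (hz : ‖z‖ < 1) :
    HasDerivAt (mehlerKernel x y)
      ((z * (1 - z ^ 2) + x * y * (1 + z ^ 2) - (x ^ 2 + y ^ 2) * z) / (1 - z ^ 2) ^ 2
        * mehlerKernel x y z) z := by
  have hs := one_sub_sq_mem_slitPlane hz
  have h0 : 1 - z ^ 2 ≠ 0 := slitPlane_ne_zero hs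
  have hd : HasDerivAt (fun z : ℂ => 1 - z ^ 2) (-(2 * z)) z := by
    simpa using (hasDerivAt_pow 2 z).const_sub 1
  have hn : HasDerivAt (fun z : ℂ => 2 * z * x * y - z ^ 2 * (x ^ 2 + y ^ 2))
      (2 * x * y - 2 * z * (x ^ 2 + y ^ 2)) z := by
    have h1 := (((hasDerivAt_id z).const_mul 2).mul_const x).mul_const y
    have h2 := (hasDerivAt_pow 2 z).mul_const (x ^ 2 + y ^ 2)
    simpa using h1.fun_sub h2
  have hc := (hd.cpow_const (c := (-1 / 2 : ℂ)) hs).fun_mul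
    (hn.fun_div (hd.const_mul 2) (mul_ne_zero two_ne_zero h0)).cexp
  refine hc.congr_deriv ?_
  rw [cpow_sub _ _ h0, cpow_one, mehlerKernel]
  field_simp
  ring

/-- The Taylor coefficients at the origin of the Mehler kernel. -/
def mehlerCoeff (x y : ℂ) (n : ℕ) : ℂ :=
  (n.factorial : ℂ)⁻¹ * iteratedDeriv n (mehlerKernel x y) 0

theorem differentiableOn_mehlerKernel (x y : ℂ) :
    DifferentiableOn ℂ (mehlerKernel x y) (Metric.ball 0 1) := fun z hz =>
  (hasDerivAt_mehlerKernel x y (by simpa using hz)).differentiableAt.differentiableWithinAt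

theorem hasSum_mehlerCoeff (x y : ℂ) {z : ℂ} (hz : ‖z‖ < 1) :
    HasSum (fun n => mehlerCoeff x y n * z ^ n) (mehlerKernel x y z) := by
  convert! Complex.hasSum_taylorSeries_on_ball (differentiableOn_mehlerKernel x y)
    (show z ∈ Metric.ball 0 1 by simpa using hz) using 2 with n
  simp only [mehlerCoeff, sub_zero, smul_eq_mul]
  ring

theorem hasSum_deriv_mehlerCoeff (x y : ℂ) {z : ℂ} (hz : ‖z‖ < 1) :
    HasSum (fun n : ℕ => (n + 1) * mehlerCoeff x y (n + 1) * z ^ n)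
      (deriv (mehlerKernel x y) z) := by
  convert! Complex.hasSum_taylorSeries_on_ball
    ((differentiableOn_mehlerKernel x y).deriv Metric.isOpen_ball)
    (show z ∈ Metric.ball 0 1 by simpa using hz) using 2 with n
  have h1 : (n : ℂ) + 1 ≠ 0 := by exact_mod_cast n.succ_ne_zero
  have hf : (n.factorial : ℂ) ≠ 0 := by exact_mod_cast n.factorial_ne_zero
  simp only [mehlerCoeff, sub_zero, smul_eq_mul, iteratedDeriv_succ', Nat.factorial_succ]
  push_cast
  field_simp

/-- The differential equation of the Mehler kernel, read off on Taylor coefficients. -/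
theorem mehlerCoeff_ode (x y : ℂ) (n : ℕ) :
    letI a := mehlerCoeff x y
    letI d : ℕ → ℂ := fun n => (n + 1) * a (n + 1)
    d n - 2 * shiftCoeff (shiftCoeff d) n
      + shiftCoeff (shiftCoeff (shiftCoeff (shiftCoeff d))) n
      - (shiftCoeff a n - shiftCoeff (shiftCoeff (shiftCoeff a)) n
        + x * y * (a n + shiftCoeff (shiftCoeff a) n)
        - (x ^ 2 + y ^ 2) * shiftCoeff a n) = 0 := by
  revert n
  refine coeff_eq_zero_of_hasSum_zero fun z hz => ?_
  have ha := hasSum_mehlerCoeff x y hz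
  have hd := hasSum_deriv_mehlerCoeff x y hz
  have ha1 := hasSum_shiftCoeff ha
  have ha2 := hasSum_shiftCoeff ha1
  have ha3 := hasSum_shiftCoeff ha2
  have hd2 := hasSum_shiftCoeff (hasSum_shiftCoeff hd)
  have hd4 := hasSum_shiftCoeff (hasSum_shiftCoeff hd2)
  convert! ((hd.sub (hd2.mul_left 2)).add hd4).sub (((ha1.sub ha3).add
    ((ha.add ha2).mul_left (x * y))).sub (ha1.mul_left (x ^ 2 + y ^ 2))) using 1
  · funext n
    ring
  · have h0 : 1 - z ^ 2 ≠ 0 := Complex.slitPlane_ne_zero (one_sub_sq_mem_slitPlane hz)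
    rw [(hasDerivAt_mehlerKernel x y hz).deriv]
    field_simp
    ring

theorem mehlerCoeff_eq_hermiteCoeff (x y : ℝ) (n : ℕ) :
    mehlerCoeff x y n = hermiteCoeff x y n := by
  have h0 : mehlerCoeff x y 0 = hermiteCoeff x y 0 := by
    simp [mehlerCoeff, mehlerKernel, hermiteCoeff, probHermite]
  have h1 : mehlerCoeff x y 1 = hermiteCoeff x y 1 := by
    have h := mehlerCoeff_ode x y 0
    simp only [shiftCoeff, h0] at h
    simp [hermiteCoeff, probHermite] at h ⊢
    linear_combination h
  have h2 : mehlerCoeff x y 2 = hermiteCoeff x y 2 := by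
    have h := mehlerCoeff_ode x y 1
    simp only [shiftCoeff, h0, h1] at h
    simp [hermiteCoeff, probHermite] at h ⊢
    linear_combination h / 2
  have h3 : mehlerCoeff x y 3 = hermiteCoeff x y 3 := by
    have h := mehlerCoeff_ode x y 2
    simp only [shiftCoeff, h0, h1, h2] at h
    simp [hermiteCoeff, probHermite, Nat.factorial] at h ⊢
    linear_combination h / 3
  induction n using Nat.strong_induction_on with
  | _ n ih =>
    match n with
    | 0 => exact h0
    | 1 => exact h1
    | 2 => exact h2
    | 3 => exact h3
    | n + 4 =>
      have h := mehlerCoeff_ode x y (n + 3)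
      have hr := congrArg Complex.ofReal (hermiteCoeff_recurrence x y n)
      have h4 : (n : ℂ) + 4 ≠ 0 := by exact_mod_cast (n + 3).succ_ne_zero
      have i0 := ih n (by omega)
      have i1 := ih (n + 1) (by omega)
      have i2 := ih (n + 2) (by omega)
      have i3 := ih (n + 3) (by omega)
      refine mul_left_cancel₀ h4 ?_
      cases n <;>
      · simp only [shiftCoeff, i1, i2, i3, i0] at h
        push_cast at h hr ⊢
        linear_combination h - hr

/-- Mehler formula. -/
theorem mehler (x y ρ : ℝ) (hρ : |ρ| < 1) :
    HasSum (fun n : ℕ => ρ ^ n / n.factorial * probHermite n x * probHermite n y)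
      (1 / Real.sqrt (1 - ρ ^ 2) * Real.exp ((x ^ 2 + y ^ 2) / 2) *
        Real.exp (-(x ^ 2 + y ^ 2 - 2 * ρ * x * y) / (2 * (1 - ρ ^ 2)))) := by
  have hρ2 : 0 < 1 - ρ ^ 2 := by
    have := (sq_lt_one_iff_abs_lt_one ρ).2 hρ
    linarith
  rw [← Complex.hasSum_ofReal]
  convert hasSum_mehlerCoeff x y (z := (ρ : ℂ)) (by simpa using hρ) using 1
  · funext n
    rw [mehlerCoeff_eq_hermiteCoeff, hermiteCoeff]
    push_cast
    ring
  · have hs : (1 - (ρ : ℂ) ^ 2) ^ (-1 / 2 : ℂ) = ((1 / Real.sqrt (1 - ρ ^ 2) : ℝ) : ℂ) := by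
      rw [Real.sqrt_eq_rpow, one_div, ← Real.rpow_neg hρ2.le, Complex.ofReal_cpow hρ2.le]
      push_cast
      ring_nf
    rw [mehlerKernel, hs, mul_assoc, ← Real.exp_add, Complex.ofReal_mul, Complex.ofReal_exp]
    congr 2
    have h0 : 1 - (ρ : ℂ) ^ 2 ≠ 0 := by exact_mod_cast hρ2.ne'
    push_cast
    field_simp
    ring
end
end

section
/- For all real q, ρ with |q| < 1 and |ρ| < 1, and all x, y ∈ S(q), the series Σ_{n=0}^∞ (ρⁿ/((ρ²;q)_n·[n]_q!))·B_n(y|q)·P_n(x|y,ρ,q) converges and equals the reciprocal of Σ_{n=0}^∞ (ρⁿ/[n]_q!)·H_n(x|q)·H_n(y|q); in particular the latter sum is nonzero. -/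
noncomputable section

open Finset

theorem qInt_zero (q : ℝ) : qInt q 0 = 0 := by simp [qInt]

theorem qInt_add (q : ℝ) (m n : ℕ) : qInt q (m + n) = qInt q m + q ^ m * qInt q n := by
  simp only [qInt, Finset.sum_range_add, Finset.mul_sum, pow_add]

theorem one_sub_mul_qInt (q : ℝ) (n : ℕ) : (1 - q) * qInt q n = 1 - q ^ n := by
  rw [qInt, mul_comm]
  linarith [geom_sum_mul q n]

theorem sqrt_sq_mul_qInt {q : ℝ} (hq : |q| < 1) (n : ℕ) :
    √(1 - q) ^ 2 * qInt q n = 1 - q ^ n := by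
  rw [Real.sq_sqrt (by linarith [(abs_lt.mp hq).2]), one_sub_mul_qInt]

theorem qInt_succ_pos {q : ℝ} (hq : |q| < 1) (n : ℕ) : 0 < qInt q (n + 1) := by
  have h1 : 0 < 1 - q := by linarith [(abs_lt.mp hq).2]
  have h2 : q ^ (n + 1) < 1 := by
    refine lt_of_le_of_lt (le_abs_self _) ?_
    rw [abs_pow]
    exact pow_lt_one₀ (abs_nonneg q) hq n.succ_ne_zero
  refine pos_of_mul_pos_right (a := 1 - q) ?_ h1.le
  rw [one_sub_mul_qInt]
  linarith

theorem qFact_succ (q : ℝ) (n : ℕ) : qFact q (n + 1) = qFact q n * qInt q (n + 1) := by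
  simp [qFact, Finset.prod_range_succ]

theorem qFact_pos {q : ℝ} (hq : |q| < 1) (n : ℕ) : 0 < qFact q n :=
  Finset.prod_pos fun j _ => qInt_succ_pos hq j

theorem qPoch_succ (a q : ℝ) (n : ℕ) : qPoch a q (n + 1) = qPoch a q n * (1 - a * q ^ n) := by
  simp [qPoch, Finset.prod_range_succ]

theorem one_sub_mul_pow_pos {a q : ℝ} (ha : |a| < 1) (hq : |q| < 1) (n : ℕ) :
    0 < 1 - a * q ^ n := by
  have h : |a * q ^ n| < 1 := by
    rw [abs_mul, abs_pow]
    exact mul_lt_one_of_nonneg_of_lt_one_left (abs_nonneg a) ha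
      (pow_le_one₀ (abs_nonneg q) hq.le)
  linarith [(abs_lt.mp h).2]

theorem qPoch_pos {a q : ℝ} (ha : |a| < 1) (hq : |q| < 1) (n : ℕ) : 0 < qPoch a q n :=
  Finset.prod_pos fun j _ => one_sub_mul_pow_pos ha hq j

/-- The three-term recurrence of `qHermite`, valid also at `n = 0` since `[0]_q = 0`. -/
theorem qHermite_succ (q x : ℝ) (n : ℕ) :
    qHermite q (n + 1) x = x * qHermite q n x - qInt q n * qHermite q (n - 1) x := by
  cases n with
  | zero => simp [qHermite, qInt_zero]
  | succ n => rw [qHermite]; simp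

/-- The three-term recurrence of `qB`, valid also at `n = 0` since `[0]_q = 0`. -/
theorem qB_succ (q y : ℝ) (n : ℕ) :
    qB q (n + 1) y = -q ^ n * y * qB q n y + q ^ (n - 1) * qInt q n * qB q (n - 1) y := by
  cases n with
  | zero => simp [qB, qInt_zero]
  | succ n => rw [qB]; simp

/-- A `q`-analogue of the product rule, for Cauchy products of sequences. -/
theorem qInt_mul_sum_antidiagonal (q : ℝ) (b h : ℕ → ℝ) (N : ℕ) :
    qInt q (N + 1) * ∑ p ∈ antidiagonal (N + 1), b p.1 * h p.2 =
      ∑ p ∈ antidiagonal N, (qInt q (p.1 + 1) * b (p.1 + 1) * h p.2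
        + q ^ p.1 * b p.1 * (qInt q (p.2 + 1) * h (p.2 + 1))) := by
  have h1 : qInt q (N + 1) * ∑ p ∈ antidiagonal (N + 1), b p.1 * h p.2 =
      ∑ p ∈ antidiagonal (N + 1), qInt q p.1 * b p.1 * h p.2
        + ∑ p ∈ antidiagonal (N + 1), q ^ p.1 * b p.1 * (qInt q p.2 * h p.2) := by
    rw [Finset.mul_sum, ← Finset.sum_add_distrib]
    refine Finset.sum_congr rfl fun p hp => ?_
    rw [← mem_antidiagonal.mp hp, qInt_add]
    ring
  rw [h1, Finset.Nat.sum_antidiagonal_succ, Finset.Nat.sum_antidiagonal_succ' (n := N),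
    Finset.sum_add_distrib]
  simp [qInt_zero]

theorem qInt_mul_div_qFact_succ {q : ℝ} (hq : |q| < 1) (n : ℕ) (a : ℝ) :
    qInt q (n + 1) * (a / qFact q (n + 1)) = a / qFact q n := by
  have h1 := (qInt_succ_pos hq n).ne'
  have h2 := (qFact_pos hq n).ne'
  rw [qFact_succ]
  field_simp

/-- The sequences `B_n(y|q) / [n]_q!` and `H_n(y|q) / [n]_q!` are inverse to each other
with respect to the Cauchy product. -/
theorem sum_antidiagonal_qB_qHermite {q : ℝ} (hq : |q| < 1) (y : ℝ) (N : ℕ) :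
    ∑ p ∈ antidiagonal (N + 1), qB q p.1 y / qFact q p.1 * (qHermite q p.2 y / qFact q p.2)
      = 0 := by
  have key := qInt_mul_sum_antidiagonal q (fun n => qB q n y / qFact q n)
    (fun n => qHermite q n y / qFact q n) N
  refine (mul_eq_zero.mp (key.trans ?_)).resolve_left (qInt_succ_pos hq N).ne'
  simp only [qInt_mul_div_qFact_succ hq]
  have h1 : ∀ p ∈ antidiagonal N,
      qB q (p.1 + 1) y / qFact q p.1 * (qHermite q p.2 y / qFact q p.2)
        + q ^ p.1 * (qB q p.1 y / qFact q p.1) * (qHermite q (p.2 + 1) y / qFact q p.2)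
      = q ^ (p.1 - 1) * qInt q p.1 * qB q (p.1 - 1) y / qFact q p.1
          * (qHermite q p.2 y / qFact q p.2)
        - q ^ p.1 * (qB q p.1 y / qFact q p.1)
          * (qInt q p.2 * qHermite q (p.2 - 1) y / qFact q p.2) := by
    intro p _
    rw [qB_succ, qHermite_succ]
    ring
  rw [Finset.sum_congr rfl h1, Finset.sum_sub_distrib]
  cases N with
  | zero => simp [qInt_zero]
  | succ N =>
    rw [Finset.Nat.sum_antidiagonal_succ, Finset.Nat.sum_antidiagonal_succ' (n := N)]
    simp only [qInt_zero, Nat.add_sub_cancel, mul_zero, zero_mul, zero_div, zero_add]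
    rw [← Finset.sum_sub_distrib]
    refine Finset.sum_eq_zero fun p _ => ?_
    have h2 := (qInt_succ_pos hq p.1).ne'
    have h3 := (qInt_succ_pos hq p.2).ne'
    have h4 := (qFact_pos hq p.1).ne'
    have h5 := (qFact_pos hq p.2).ne'
    rw [qFact_succ, qFact_succ]
    field_simp
    ring

/-- The general term of the shifted Poisson–Mehler series
`∑ₙ ρⁿ / [n]_q! · H_n(y|q) · H_{n+m}(x|q)`. -/
def mehlerTerm (q ρ x y : ℝ) (m n : ℕ) : ℝ :=
  ρ ^ n / qFact q n * qHermite q n y * qHermite q (n + m) x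

theorem hasSum_of_eq {ι : Type*} {f g : ι → ℝ} {a : ℝ} (hfg : ∀ i, f i = g i)
    (h : HasSum g a) : HasSum f a := by
  rwa [funext hfg]

theorem hasSum_succ_of_zero {f : ℕ → ℝ} {a : ℝ} (h0 : f 0 = 0)
    (h : HasSum (fun n => f (n + 1)) a) : HasSum f a := by
  simpa [h0] using (hasSum_nat_add_iff (f := f) 1).mp h

/-- The shifted Poisson–Mehler sums satisfy a three-term recurrence in the shift. -/
theorem mehlerTerm_recurrence {q ρ x y : ℝ} (hq : |q| < 1) {K : ℕ → ℝ}
    (hK : ∀ m, HasSum (mehlerTerm q ρ x y m) (K m)) (m : ℕ) :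
    (1 - ρ ^ 2 * q ^ m) * K (m + 1) = (x - ρ * y * q ^ m) * K m - qInt q m * K (m - 1) := by
  have hfact : ∀ n, ρ ^ (n + 1) * qInt q (n + 1) / qFact q (n + 1) = ρ * (ρ ^ n / qFact q n) := by
    intro n
    rw [mul_comm (ρ ^ (n + 1)), mul_div_assoc, qInt_mul_div_qFact_succ hq, pow_succ]
    ring
  have hE : HasSum (fun n => ρ ^ n * qInt q n / qFact q n * qHermite q (n - 1) y
      * qHermite q (n + m) x) (ρ * K (m + 1)) := by
    refine hasSum_succ_of_zero (by simp [qInt_zero])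
      (hasSum_of_eq (fun n => ?_) ((hK (m + 1)).mul_left ρ))
    rw [hfact, mehlerTerm, Nat.add_sub_cancel, show n + 1 + m = n + (m + 1) by ring]
    ring
  have hD : HasSum (fun n => ρ ^ n * qInt q n / qFact q n * qHermite q n y
      * qHermite q (n + m - 1) x) (ρ * (y * K m - ρ * K (m + 1))) := by
    refine hasSum_succ_of_zero (by simp [qInt_zero])
      (hasSum_of_eq (fun n => ?_) ((((hK m).mul_left y).sub hE).mul_left ρ))
    rw [hfact, mehlerTerm, qHermite_succ, show n + 1 + m - 1 = n + m by omega]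
    ring
  have hS : HasSum (mehlerTerm q ρ x y (m + 1))
      (x * K m - qInt q m * K (m - 1) - q ^ m * (ρ * (y * K m - ρ * K (m + 1)))) := by
    refine hasSum_of_eq (fun n => ?_) ((((hK m).mul_left x).sub
      ((hK (m - 1)).mul_left (qInt q m))).sub (hD.mul_left (q ^ m)))
    have hm : qInt q m * qHermite q (n + (m - 1)) x = qInt q m * qHermite q (n + m - 1) x := by
      cases m with
      | zero => simp [qInt_zero]
      | succ m => rfl
    have hrec : qHermite q (n + (m + 1)) x = x * qHermite q (n + m) x
        - (qInt q m + q ^ m * qInt q n) * qHermite q (n + m - 1) x := by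
      rw [← add_assoc, qHermite_succ, ← qInt_add, add_comm m n]
    simp only [mehlerTerm]
    rw [hrec]
    linear_combination (ρ ^ n / qFact q n * qHermite q n y) * hm
  linear_combination (hK (m + 1)).unique hS

/-- Carlitz's formula: the shifted Poisson–Mehler sums are multiples of the unshifted one by
Al-Salam–Chihara polynomials. -/
theorem qPoch_mul_mehler {q ρ x y : ℝ} (hq : |q| < 1) {K : ℕ → ℝ}
    (hK : ∀ m, HasSum (mehlerTerm q ρ x y m) (K m)) (m : ℕ) :
    qPoch (ρ ^ 2) q m * K m = K 0 * ASC q y ρ m x := by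
  induction m using Nat.strong_induction_on with
  | _ m ih =>
    match m with
    | 0 => simp [qPoch, ASC]
    | 1 =>
      have h := mehlerTerm_recurrence hq hK 0
      simp only [qInt_zero] at h
      simp only [qPoch, ASC, Finset.prod_range_one]
      linear_combination h
    | m + 2 =>
      have h := mehlerTerm_recurrence hq hK (m + 1)
      have h1 := ih (m + 1) (by omega)
      have h0 := ih m (by omega)
      rw [Nat.add_sub_cancel] at h
      rw [ASC, qPoch_succ]
      rw [qPoch_succ] at h1 ⊢
      linear_combination (qPoch (ρ ^ 2) q m * (1 - ρ ^ 2 * q ^ m)) * h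
        + (x - ρ * y * q ^ (m + 1)) * h1 - (1 - ρ ^ 2 * q ^ m) * qInt q (m + 1) * h0

/-- A nonnegative sequence whose consecutive ratios are eventually at most `r` is `O(r ^ n)`. -/
theorem exists_le_mul_pow {r : ℝ} (hr : 0 < r) {s : ℕ → ℝ}
    (h : ∀ᶠ n in Filter.atTop, s (n + 1) ≤ r * s n) :
    ∃ C, 0 ≤ C ∧ ∀ n, s n ≤ C * r ^ n := by
  obtain ⟨N, hN⟩ := Filter.eventually_atTop.mp h
  refine ⟨∑ k ∈ range (N + 1), |s k| / r ^ k, by positivity, fun n => ?_⟩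
  have hbase : ∀ n ≤ N, s n ≤ (∑ k ∈ range (N + 1), |s k| / r ^ k) * r ^ n := by
    intro n hn
    have := Finset.single_le_sum (f := fun k => |s k| / r ^ k) (fun k _ => by positivity)
      (mem_range.mpr (Nat.lt_succ_of_le hn))
    refine (le_abs_self _).trans ?_
    rwa [div_le_iff₀ (by positivity)] at this
  rcases le_total n N with hn | hn
  · exact hbase n hn
  · induction n, hn using Nat.le_induction with
    | base => exact hbase N le_rfl
    | succ n hn ih =>
      calc s (n + 1) ≤ r * s n := hN n hn
        _ ≤ r * ((∑ k ∈ range (N + 1), |s k| / r ^ k) * r ^ n) := by gcongr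
        _ = _ := by ring

theorem eventually_pow_abs_le {q : ℝ} (hq : |q| < 1) {ε : ℝ} (hε : 0 < ε) :
    ∀ᶠ n : ℕ in Filter.atTop, |q| ^ n ≤ ε :=
  ((tendsto_pow_atTop_nhds_zero_of_lt_one (abs_nonneg q) hq).eventually_lt_const hε).mono
    fun _ h => h.le

/-- Solutions of `uₙ₊₂ = a uₙ₊₁ - (1 - qⁿ⁺¹) uₙ` with `|a| ≤ 2` grow subexponentially. -/
theorem exists_abs_le_of_recurrence {q a r : ℝ} (hq : |q| < 1) (ha : |a| ≤ 2) (hr : 1 < r)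
    {u : ℕ → ℝ} (hu : ∀ n, u (n + 2) = a * u (n + 1) - (1 - q ^ (n + 1)) * u n) :
    ∃ C, 0 ≤ C ∧ ∀ n, |u n| ≤ C * r ^ n := by
  have hε : 0 < r - 1 := by linarith
  have ha2 : 0 ≤ 1 - (a / 2) ^ 2 := by nlinarith [abs_le.mp ha]
  set z : ℂ := ⟨a / 2, Real.sqrt (1 - (a / 2) ^ 2)⟩ with hz
  set w : ℂ := ⟨a / 2, -Real.sqrt (1 - (a / 2) ^ 2)⟩ with hw
  have hsum : (a : ℂ) = z + w := by
    apply Complex.ext <;> simp [hz, hw]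
  have hprod : w * z = 1 := by
    apply Complex.ext <;> simp [hz, hw]
    · linarith [Real.mul_self_sqrt ha2]
    · ring
  have hznorm : ‖z‖ = 1 := by
    rw [Complex.norm_def, Real.sqrt_eq_one, Complex.normSq_mk]
    linarith [Real.mul_self_sqrt ha2]
  have hwnorm : ‖w‖ = 1 := by
    have := congrArg norm hprod
    rwa [norm_mul, hznorm, mul_one, norm_one] at this
  set v : ℕ → ℂ := fun n => (u (n + 1) : ℂ) - z * u n with hv
  have hvstep : ∀ n, v (n + 1) = w * v n + (q : ℂ) ^ (n + 1) * u n := by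
    intro n
    simp only [hv, hu]
    push_cast
    rw [hsum]
    linear_combination (u n : ℂ) * hprod
  have hvle : ∀ n, ‖v (n + 1)‖ ≤ ‖v n‖ + |q| ^ (n + 1) * |u n| := by
    intro n
    rw [hvstep]
    refine (norm_add_le _ _).trans ?_
    simp [hwnorm]
  have hule : ∀ n, |u (n + 1)| ≤ ‖v n‖ + |u n| := by
    intro n
    have h : ((u (n + 1) : ℝ) : ℂ) = v n + z * u n := by simp [hv]
    have := norm_add_le (v n) (z * u n)
    rw [← h, norm_mul, hznorm, one_mul] at this
    simpa using this
  obtain ⟨C, hC0, hC⟩ := exists_le_mul_pow (r := r) (by linarith)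
    (s := fun n => ‖v n‖ + (r - 1) * |u n|) (by
      filter_upwards [eventually_pow_abs_le hq (pow_pos hε 2)] with n hn
      have h1 : |q| ^ (n + 1) ≤ (r - 1) ^ 2 :=
        (pow_le_pow_of_le_one (abs_nonneg q) hq.le n.le_succ).trans hn
      have h2 := mul_le_mul_of_nonneg_right h1 (abs_nonneg (u n))
      have h3 := mul_le_mul_of_nonneg_left (hule n) hε.le
      linarith [hvle n])
  refine ⟨C / (r - 1), by positivity, fun n => ?_⟩
  rw [div_mul_eq_mul_div, le_div_iff₀ hε]
  linarith [hC n, norm_nonneg (v n)]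

theorem exists_abs_qHermite_le {q x r : ℝ} (hq : |q| < 1) (hr : 1 < r)
    (hx : |√(1 - q) * x| ≤ 2) :
    ∃ C, 0 ≤ C ∧ ∀ n, |√(1 - q) ^ n * qHermite q n x| ≤ C * r ^ n := by
  refine exists_abs_le_of_recurrence hq hx hr fun n => ?_
  rw [qHermite, ← sqrt_sq_mul_qInt hq]
  ring

theorem exists_abs_qB_le {q y r : ℝ} (hq : |q| < 1) (hr : 1 < r)
    (hy : |√(1 - q) * y| ≤ 2) :
    ∃ C, 0 ≤ C ∧ ∀ n, |√(1 - q) ^ n * qB q n y| ≤ C * r ^ n := by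
  have hε : 0 < (r - 1) / 2 := by linarith
  set b : ℕ → ℝ := fun n => √(1 - q) ^ n * qB q n y with hb
  have hrec : ∀ n, b (n + 2) = -(q ^ (n + 1) * (√(1 - q) * y) * b (n + 1))
      + q ^ n * (1 - q ^ (n + 1)) * b n := by
    intro n
    simp only [hb]
    rw [qB, ← sqrt_sq_mul_qInt hq]
    ring
  clear_value b
  have hle : ∀ n, |b (n + 2)| ≤ |q| ^ n * (2 * |b (n + 1)|) + |q| ^ n * (2 * |b n|) := by
    intro n
    have h1 : |q| ^ (n + 1) ≤ 1 := pow_le_one₀ (abs_nonneg q) hq.le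
    have h2 : |1 - q ^ (n + 1)| ≤ 2 := by
      refine (abs_sub _ _).trans ?_
      rw [abs_one, abs_pow]
      linarith
    have h3 : |q| ^ (n + 1) ≤ |q| ^ n := pow_le_pow_of_le_one (abs_nonneg q) hq.le n.le_succ
    rw [hrec]
    refine (abs_add_le _ _).trans ?_
    rw [abs_neg]
    rw [abs_mul _ (b (n + 1)), abs_mul _ (b n), abs_mul (q ^ (n + 1)), abs_mul (q ^ n), abs_pow,
      abs_pow, mul_assoc, mul_assoc]
    gcongr
  obtain ⟨C, hC0, hC⟩ := exists_le_mul_pow (r := r) (by linarith)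
    (s := fun n => |b n| + |b (n + 1)|) (by
      filter_upwards [eventually_pow_abs_le hq hε] with n hn
      have h1 := mul_le_mul_of_nonneg_right hn (abs_nonneg (b n))
      have h2 := mul_le_mul_of_nonneg_right hn (abs_nonneg (b (n + 1)))
      have h3 := hle n
      have h4 := abs_nonneg (b n)
      linarith)
  have hbC : ∀ n, |b n| ≤ C * r ^ n := fun n => by linarith [hC n, abs_nonneg (b (n + 1))]
  exact ⟨C, hC0, fun n => by simpa only [hb] using hbC n⟩

theorem exists_inv_qFact_le {q r : ℝ} (hq : |q| < 1) (hr : 1 < r) :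
    ∃ C, 0 ≤ C ∧ ∀ n, ((√(1 - q) ^ n) ^ 2 * qFact q n)⁻¹ ≤ C * r ^ n := by
  refine exists_le_mul_pow (by linarith) ?_
  have hε : 0 < 1 - r⁻¹ := by linarith [inv_lt_one_of_one_lt₀ hr]
  filter_upwards [eventually_pow_abs_le hq hε] with n hn
  have h1 : q ^ (n + 1) ≤ 1 - r⁻¹ := by
    refine (le_abs_self _).trans ?_
    rw [abs_pow]
    exact (pow_le_pow_of_le_one (abs_nonneg q) hq.le n.le_succ).trans hn
  have h2 : (√(1 - q) ^ (n + 1)) ^ 2 * qFact q (n + 1)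
      = (1 - q ^ (n + 1)) * ((√(1 - q) ^ n) ^ 2 * qFact q n) := by
    rw [qFact_succ, ← sqrt_sq_mul_qInt hq]
    ring
  have h3 := qFact_pos hq n
  rw [h2, mul_inv]
  gcongr
  exact inv_le_of_inv_le₀ (by linarith) (by linarith)

theorem abs_sqrt_mul_le_two {q x : ℝ} (hq : |q| < 1) (hx : x ∈ Sq q) : |√(1 - q) * x| ≤ 2 := by
  have hs : 0 < √(1 - q) := Real.sqrt_pos.mpr (by linarith [(abs_lt.mp hq).2])
  have h : |x| ≤ 2 / √(1 - q) := abs_le.mpr hx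
  rw [abs_mul, abs_of_pos hs, mul_comm]
  exact (le_div_iff₀ hs).mp h

theorem exists_one_lt_mul_pow_three_lt_one {a : ℝ} (ha : a < 1) : ∃ r, 1 < r ∧ a * r ^ 3 < 1 := by
  have h : Filter.Tendsto (fun r : ℝ => a * r ^ 3) (nhdsWithin 1 (Set.Ioi 1)) (nhds (a * 1 ^ 3)) :=
    ((continuous_const.mul (continuous_pow 3)).tendsto 1).mono_left nhdsWithin_le_nhds
  obtain ⟨r, h1, h2⟩ :=
    ((h.eventually_lt_const (by simpa using ha)).and self_mem_nhdsWithin).exists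
  exact ⟨r, h2, h1⟩

/-- Geometric bounds on the shifted Poisson–Mehler terms and on their products with
`ρᵐ / [m]_q! · B_m(y|q)`. -/
theorem exists_mehlerTerm_bounds {q ρ x y : ℝ} (hq : |q| < 1) (hρ : |ρ| < 1)
    (hx : x ∈ Sq q) (hy : y ∈ Sq q) :
    ∃ t, 0 ≤ t ∧ t < 1 ∧ (∃ D : ℕ → ℝ, ∀ m n, |mehlerTerm q ρ x y m n| ≤ D m * t ^ n) ∧
      ∃ C, ∀ m n, |ρ ^ m / qFact q m * qB q m y * mehlerTerm q ρ x y m n|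
        ≤ C * (t ^ m * t ^ n) := by
  obtain ⟨r, hr, hlt⟩ := exists_one_lt_mul_pow_three_lt_one hρ
  have hs : 0 < √(1 - q) := Real.sqrt_pos.mpr (by linarith [(abs_lt.mp hq).2])
  obtain ⟨Cx, hx0, hCx⟩ := exists_abs_qHermite_le hq hr (abs_sqrt_mul_le_two hq hx)
  obtain ⟨Cy, hy0, hCy⟩ := exists_abs_qHermite_le hq hr (abs_sqrt_mul_le_two hq hy)
  obtain ⟨Cb, hb0, hCb⟩ := exists_abs_qB_le hq hr (abs_sqrt_mul_le_two hq hy)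
  obtain ⟨Cf, hf0, hCf⟩ := exists_inv_qFact_le hq hr
  have hterm : ∀ m n, |√(1 - q) ^ m * mehlerTerm q ρ x y m n|
      ≤ Cf * Cy * Cx * r ^ m * (|ρ| * r ^ 3) ^ n := by
    intro m n
    have hF := qFact_pos hq n
    have h1 : √(1 - q) ^ m * mehlerTerm q ρ x y m n = ρ ^ n * ((√(1 - q) ^ n) ^ 2 * qFact q n)⁻¹
        * (√(1 - q) ^ n * qHermite q n y) * (√(1 - q) ^ (n + m) * qHermite q (n + m) x) := by
      rw [mehlerTerm, pow_add]
      field_simp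
    rw [h1, abs_mul, abs_mul, abs_mul, abs_pow,
      abs_of_pos (a := ((√(1 - q) ^ n) ^ 2 * qFact q n)⁻¹) (by positivity)]
    calc _ ≤ |ρ| ^ n * (Cf * r ^ n) * (Cy * r ^ n) * (Cx * r ^ (n + m)) := by
          gcongr
          · exact hCf n
          · exact hCy n
          · exact hCx (n + m)
      _ = _ := by ring
  refine ⟨|ρ| * r ^ 3, by positivity, hlt,
    ⟨fun m => Cf * Cy * Cx * r ^ m / √(1 - q) ^ m, fun m n => ?_⟩,
    Cf * Cb * (Cf * Cy * Cx), fun m n => ?_⟩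
  · have h := hterm m n
    rw [abs_mul, abs_of_pos (pow_pos hs m)] at h
    rw [div_mul_eq_mul_div, le_div_iff₀ (pow_pos hs m), mul_comm]
    exact h
  · have hF := qFact_pos hq m
    have h1 : ρ ^ m / qFact q m * qB q m y * mehlerTerm q ρ x y m n
        = ρ ^ m * ((√(1 - q) ^ m) ^ 2 * qFact q m)⁻¹ * (√(1 - q) ^ m * qB q m y)
          * (√(1 - q) ^ m * mehlerTerm q ρ x y m n) := by
      field_simp
    rw [h1, abs_mul, abs_mul, abs_mul, abs_pow,
      abs_of_pos (a := ((√(1 - q) ^ m) ^ 2 * qFact q m)⁻¹) (by positivity)]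
    calc _ ≤ |ρ| ^ m * (Cf * r ^ m) * (Cb * r ^ m)
          * (Cf * Cy * Cx * r ^ m * (|ρ| * r ^ 3) ^ n) := by
          gcongr
          · exact hCf m
          · exact hCb m
          · exact hterm m n
      _ = _ := by ring

theorem summable_mehlerTerm {q ρ x y : ℝ} (hq : |q| < 1) (hρ : |ρ| < 1)
    (hx : x ∈ Sq q) (hy : y ∈ Sq q) (m : ℕ) : Summable (mehlerTerm q ρ x y m) := by
  obtain ⟨t, ht0, ht1, ⟨D, hD⟩, -⟩ := exists_mehlerTerm_bounds hq hρ hx hy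
  exact Summable.of_norm_bounded ((summable_geometric_of_lt_one ht0 ht1).mul_left (D m)) (hD m)

theorem hasSum_qB_mul_mehlerTerm {q ρ x y : ℝ} (hq : |q| < 1) (hρ : |ρ| < 1)
    (hx : x ∈ Sq q) (hy : y ∈ Sq q) :
    HasSum (fun p : ℕ × ℕ => ρ ^ p.1 / qFact q p.1 * qB q p.1 y * mehlerTerm q ρ x y p.1 p.2)
      1 := by
  set F : ℕ × ℕ → ℝ := fun p =>
    ρ ^ p.1 / qFact q p.1 * qB q p.1 y * mehlerTerm q ρ x y p.1 p.2 with hF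
  obtain ⟨t, ht0, ht1, -, C, hC⟩ := exists_mehlerTerm_bounds hq hρ hx hy
  have hg := summable_geometric_of_lt_one ht0 ht1
  have hsum : Summable F := by
    refine Summable.of_norm_bounded (g := fun p : ℕ × ℕ => C * (t ^ p.1 * t ^ p.2))
      (Summable.mul_left C ?_) (fun p => hC p.1 p.2)
    exact hg.mul_of_nonneg hg (fun n => by positivity) (fun n => by positivity)
  have hanti : ∀ N, ∑ p ∈ antidiagonal N, F p = if N = 0 then 1 else 0 := by
    intro N
    have h1 : ∑ p ∈ antidiagonal N, F p = ρ ^ N * qHermite q N x *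
        ∑ p ∈ antidiagonal N, qB q p.1 y / qFact q p.1 * (qHermite q p.2 y / qFact q p.2) := by
      rw [Finset.mul_sum]
      refine Finset.sum_congr rfl fun p hp => ?_
      rw [← mem_antidiagonal.mp hp, hF]
      simp only [mehlerTerm]
      rw [add_comm p.2 p.1, pow_add]
      ring
    rw [h1]
    cases N with
    | zero => simp [qHermite, qB, qFact]
    | succ N => simp [sum_antidiagonal_qB_qHermite hq]
  have h2 : HasSum (fun N => if N = 0 then (1 : ℝ) else 0) (∑' p, F p) :=
    hasSum_of_eq (fun N => (hanti N).symm) <|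
      (HasAntidiagonal.sigmaAntidiagonalEquivProd.hasSum_iff.mpr hsum.hasSum).sigma fun N =>
        Finset.hasSum (antidiagonal N) F
  rw [← h2.unique (hasSum_ite_eq 0 1)]
  exact hsum.hasSum

/-- reciprocal of the Poisson–Mehler kernel. -/
theorem poisson_mehler_reciprocal (q ρ x y : ℝ) (hq : |q| < 1) (hρ : |ρ| < 1)
    (hx : x ∈ Sq q) (hy : y ∈ Sq q) :
    (∑' n : ℕ, ρ ^ n / qFact q n * qHermite q n x * qHermite q n y) ≠ 0 ∧
    HasSum (fun n : ℕ => ρ ^ n / (qPoch (ρ ^ 2) q n * qFact q n) *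
        qB q n y * ASC q y ρ n x)
      (∑' n : ℕ, ρ ^ n / qFact q n * qHermite q n x * qHermite q n y)⁻¹ := by
  obtain ⟨K, hK⟩ : ∃ K : ℕ → ℝ, ∀ m, HasSum (mehlerTerm q ρ x y m) (K m) :=
    ⟨_, fun m => (summable_mehlerTerm hq hρ hx hy m).hasSum⟩
  have hK0 : ∑' n : ℕ, ρ ^ n / qFact q n * qHermite q n x * qHermite q n y = K 0 := by
    refine Eq.trans (tsum_congr fun n => ?_) (hK 0).tsum_eq
    rw [mehlerTerm, add_zero]
    ring
  have hρ2 : |ρ ^ 2| < 1 := by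
    rw [abs_pow]
    exact pow_lt_one₀ (abs_nonneg ρ) hρ two_ne_zero
  have hmul : HasSum (fun n : ℕ => K 0 * (ρ ^ n / (qPoch (ρ ^ 2) q n * qFact q n) *
      qB q n y * ASC q y ρ n x)) 1 := by
    have hfib : HasSum (fun m => ρ ^ m / qFact q m * qB q m y * K m) 1 :=
      (hasSum_qB_mul_mehlerTerm hq hρ hx hy).prod_fiberwise fun m => (hK m).mul_left _
    refine hasSum_of_eq (fun m => ?_) hfib
    have h1 := (qPoch_pos hρ2 hq m).ne'
    have h2 := (qFact_pos hq m).ne'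
    have h3 := qPoch_mul_mehler hq hK m
    field_simp
    linear_combination (-(ρ ^ m * qB q m y)) * h3
  rw [hK0]
  have hne : K 0 ≠ 0 := by
    intro h
    simp only [h, zero_mul] at hmul
    exact one_ne_zero (hmul.unique hasSum_zero)
  exact ⟨hne, by simpa [hne] using hmul.mul_left (K 0)⁻¹⟩
end
end
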